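/- arXiv:1102.1822 — 3 statements merged into one kernel-verified Lean document; each statement's English description precedes it below -/
import Mathlib

section
/- Let d ∈ ℂ with 0 < Re(d) < 1/2, let t ∈ ℝ and let u ∈ ℝ \ {0, t}. Then the function x ↦ ((e^{itx} − 1)/(ix)) · |x|^{−d} · Γ(d+1) · e^{−sign(x)·iπd/2} is Lebesgue integrable on ℝ, and (1/(2π)) ∫_ℝ e^{−iux} ((e^{itx} − 1)/(ix)) · |x|^{−d} · Γ(d+1) · e^{−sign(x)·iπd/2} dx = (t−u)_+^d − (−u)_+^d. -/
open MeasureTheory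

/-- `z₊^d := exp (d * log z)` for `z > 0`, and `0` otherwise. -/
noncomputable def posPow (z : ℝ) (d : ℂ) : ℂ :=
  if 0 < z then Complex.exp (d * Real.log z) else 0

/-!
For `0 ≤ re a` and `-1 < re s < 0` the Cauchy–Saalschütz formula reads
`∫₀^∞ x^(s-1) (e^(-ax) - 1) dx = Γ(s) a^(-s)`. For `a = 1` it is an integration by parts, scaling
gives `a > 0`, analytic continuation in `a` gives the open half-plane, and dominated convergence
the imaginary axis. With `s = -d` and `a = ∓iw` it evaluates the integral of the kernel
`K_w(x) = ((e^(iwx) - 1) / (ix)) |x|^(-d) Γ(d+1) e^(-sign(x) iπd/2)` over the two half-lines. On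
each of them the phase of `a^d` either cancels or doubles the factor `e^(∓iπd/2)`, according to the
sign of `w`, and the reflection formula turns the sum into `2π w₊^d`. Finally
`e^(-iux) K_t(x) = K_(t-u)(x) - K_(-u)(x)`.
-/

open Set Filter Topology Complex
open scoped Real

section RightHalfPlane

theorem eqOn_re_pos_of_eqOn_ofReal {f g : ℂ → ℂ} (hf : DifferentiableOn ℂ f {z | 0 < z.re})
    (hg : DifferentiableOn ℂ g {z | 0 < z.re}) (hfg : ∀ x : ℝ, 0 < x → f x = g x) :
    EqOn f g {z | 0 < z.re} := by
  have hU : IsOpen {z : ℂ | 0 < z.re} := isOpen_lt continuous_const continuous_re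
  have hreal : Tendsto ((↑) : ℝ → ℂ) (𝓝[>] 1) (𝓝[≠] ((1 : ℝ) : ℂ)) := by
    refine tendsto_nhdsWithin_iff.2 ⟨continuous_ofReal.continuousWithinAt, ?_⟩
    filter_upwards [self_mem_nhdsWithin] with x hx using ofReal_injective.ne (ne_of_gt hx)
  refine (hf.analyticOnNhd hU).eqOn_of_preconnected_of_frequently_eq (hg.analyticOnNhd hU)
    (convex_halfSpace_re_gt 0).isPreconnected (z₀ := ((1 : ℝ) : ℂ)) (by simp)
    (hreal.frequently (Eventually.frequently ?_))
  filter_upwards [self_mem_nhdsWithin] with x hx using hfg x (one_pos.trans hx)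

theorem norm_exp_neg_le_one {z : ℂ} (hz : 0 ≤ z.re) : ‖exp (-z)‖ ≤ 1 := by
  simpa [norm_exp] using hz

theorem norm_exp_neg_sub_one_le_norm {z : ℂ} (hz : 0 ≤ z.re) : ‖exp (-z) - 1‖ ≤ ‖z‖ := by
  have hderiv : ∀ w ∈ {w : ℂ | 0 ≤ w.re},
      HasDerivWithinAt (fun w ↦ exp (-w)) (-exp (-w)) {w | 0 ≤ w.re} w := fun w _ ↦ by
    simpa using (hasDerivAt_neg w).cexp.hasDerivWithinAt
  simpa using (convex_halfSpace_re_ge 0).norm_image_sub_le_of_norm_hasDerivWithin_le hderiv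
    (fun w hw ↦ (norm_neg _).trans_le (norm_exp_neg_le_one hw)) (x := 0) (by simp) hz

theorem norm_exp_neg_sub_one_le_two {z : ℂ} (hz : 0 ≤ z.re) : ‖exp (-z) - 1‖ ≤ 2 :=
  calc ‖exp (-z) - 1‖ ≤ ‖exp (-z)‖ + ‖(1 : ℂ)‖ := norm_sub_le _ _
    _ ≤ 1 + 1 := by gcongr; exacts [norm_exp_neg_le_one hz, norm_one.le]
    _ = 2 := one_add_one_eq_two

end RightHalfPlane

section CauchySaalschutz

theorem integrableOn_rpow_sub_one_mul_min {r C M : ℝ} (hr : -1 < r) (hr' : r < 0) (hC : 0 ≤ C)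
    (hM : 0 ≤ M) : IntegrableOn (fun x : ℝ ↦ x ^ (r - 1) * min (C * x) M) (Ioi 0) := by
  have hcont : Continuous fun x : ℝ ↦ min (C * x) M := by fun_prop
  have hnonneg : ∀ {x : ℝ}, 0 < x → 0 ≤ min (C * x) M := fun hx ↦ le_min (by positivity) hM
  refine mellin_convergent_of_isBigO_scalar (hcont.locallyIntegrable.locallyIntegrableOn _)
    (a := 0) (b := -1) (.of_bound M ?_) hr' (.of_bound C ?_) hr
  · filter_upwards [eventually_gt_atTop 0] with x hx
    simp [Real.norm_of_nonneg (hnonneg hx)]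
  · filter_upwards [self_mem_nhdsWithin] with x hx
    simp [Real.norm_of_nonneg (hnonneg hx), abs_of_pos (show 0 < x from hx)]

variable {s a : ℂ}

theorem norm_cpow_sub_one_smul_exp_neg_sub_one_le {C x : ℝ} (ha : 0 ≤ a.re) (haC : ‖a‖ ≤ C)
    (hx : 0 < x) :
    ‖(x : ℂ) ^ (s - 1) • (exp (-(a * x)) - 1)‖ ≤ x ^ (s.re - 1) * min (C * x) 2 := by
  have hre : 0 ≤ (a * x).re := by simpa using mul_nonneg ha hx.le
  have hnorm : ‖a * x‖ ≤ C * x := by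
    rw [norm_mul, norm_real, Real.norm_of_nonneg hx.le]
    gcongr
  rw [norm_smul, norm_cpow_eq_rpow_re_of_pos hx, sub_re, one_re]
  gcongr
  exact le_min ((norm_exp_neg_sub_one_le_norm hre).trans hnorm) (norm_exp_neg_sub_one_le_two hre)

theorem aestronglyMeasurable_cpow_smul {g : ℝ → ℂ} (hg : Continuous g) (s : ℂ) :
    AEStronglyMeasurable (fun x : ℝ ↦ (x : ℂ) ^ s • g x) (volume.restrict (Ioi 0)) := by
  refine ContinuousOn.aestronglyMeasurable (fun x hx ↦ ?_) measurableSet_Ioi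
  exact ((continuousAt_ofReal_cpow_const x s (.inr (ne_of_gt hx))).smul
    hg.continuousAt).continuousWithinAt

theorem mellinConvergent_exp_neg_mul_sub_one (hs : -1 < s.re) (hs' : s.re < 0) (ha : 0 ≤ a.re) :
    MellinConvergent (fun x : ℝ ↦ exp (-(a * x)) - 1) s := by
  refine (integrableOn_rpow_sub_one_mul_min hs hs' (norm_nonneg a) zero_le_two).mono'
    (aestronglyMeasurable_cpow_smul (by fun_prop) _) ?_
  filter_upwards [ae_restrict_mem measurableSet_Ioi] with x hx
  exact norm_cpow_sub_one_smul_exp_neg_sub_one_le ha le_rfl hx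

theorem continuousOn_mellin_exp_neg_mul_sub_one (hs : -1 < s.re) (hs' : s.re < 0) :
    ContinuousOn (fun a : ℂ ↦ mellin (fun x : ℝ ↦ exp (-(a * x)) - 1) s) {a | 0 ≤ a.re} := by
  intro a _
  have hbound : IntegrableOn (fun x : ℝ ↦ x ^ (s.re - 1) * min ((‖a‖ + 1) * x) 2) (Ioi 0) :=
    integrableOn_rpow_sub_one_mul_min hs hs' (by positivity) zero_le_two
  refine continuousWithinAt_of_dominated (.of_forall fun z ↦
    aestronglyMeasurable_cpow_smul (by fun_prop) _) ?_ hbound (.of_forall fun x ↦ ?_)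
  · have hnear : ∀ᶠ z in 𝓝[{a : ℂ | 0 ≤ a.re}] a, ‖z‖ < ‖a‖ + 1 :=
      continuous_norm.continuousWithinAt.eventually_lt continuousWithinAt_const (lt_add_one ‖a‖)
    filter_upwards [self_mem_nhdsWithin, hnear] with z hz hza
    filter_upwards [ae_restrict_mem measurableSet_Ioi] with x hx
    exact norm_cpow_sub_one_smul_exp_neg_sub_one_le hz hza.le hx
  · exact Continuous.continuousWithinAt (by fun_prop)

theorem differentiableAt_mellin_exp_neg_mul_sub_one (hs : -1 < s.re) (hs' : s.re < 0)
    (ha : 0 < a.re) :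
    DifferentiableAt ℂ (fun a : ℂ ↦ mellin (fun x : ℝ ↦ exp (-(a * x)) - 1) s) a := by
  have hbound : IntegrableOn (fun x : ℝ ↦ x ^ s.re * Real.exp (-(a.re / 2) * x)) (Ioi 0) := by
    simpa using integrableOn_rpow_mul_exp_neg_mul_rpow hs one_pos (half_pos ha)
  have hnear : {z : ℂ | a.re / 2 < z.re} ∈ 𝓝 a :=
    (isOpen_lt continuous_const continuous_re).mem_nhds (half_lt_self ha)
  refine (hasDerivAt_integral_of_dominated_loc_of_deriv_le
    (F := fun (z : ℂ) (x : ℝ) ↦ (x : ℂ) ^ (s - 1) • (exp (-(z * x)) - 1))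
    (F' := fun (z : ℂ) (x : ℝ) ↦ (x : ℂ) ^ (s - 1) • (exp (-(z * x)) * -x)) hnear
    (.of_forall fun z ↦ aestronglyMeasurable_cpow_smul (by fun_prop) _)
    (mellinConvergent_exp_neg_mul_sub_one hs hs' ha.le)
    (aestronglyMeasurable_cpow_smul (by fun_prop) _) ?_ hbound (.of_forall fun x z _ ↦ ?_)
    ).2.differentiableAt
  · filter_upwards [ae_restrict_mem measurableSet_Ioi] with x (hx : 0 < x) z (hz : a.re / 2 < z.re)
    calc ‖(x : ℂ) ^ (s - 1) • (exp (-(z * x)) * -x)‖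
        = x ^ (s.re - 1) * (Real.exp (-z.re * x) * x) := by
          simp [norm_cpow_eq_rpow_re_of_pos hx, norm_exp, abs_of_pos hx]
      _ = x ^ s.re * Real.exp (-z.re * x) := by
          rw [Real.rpow_sub_one hx.ne']
          field_simp
      _ ≤ x ^ s.re * Real.exp (-(a.re / 2) * x) := by gcongr
  · have hlin : HasDerivAt (fun z : ℂ ↦ -(z * x)) (-x : ℂ) z := (hasDerivAt_mul_const _).fun_neg
    exact (hlin.cexp.sub_const 1).fun_const_smul _

theorem tendsto_exp_neg_sub_one_mul_cpow_nhdsGT_zero (hs : -1 < s.re) :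
    Tendsto (fun x : ℝ ↦ (exp (-(x : ℂ)) - 1) * (x : ℂ) ^ s) (𝓝[>] 0) (𝓝 0) := by
  have hlim : Tendsto (fun x : ℝ ↦ x ^ (s.re + 1)) (𝓝[>] 0) (𝓝 0) := by
    have hcont := Real.continuousAt_rpow_const 0 (s.re + 1) (.inr (by linarith))
    simpa [Real.zero_rpow (show s.re + 1 ≠ 0 by linarith)] using
      hcont.tendsto.mono_left nhdsWithin_le_nhds
  refine squeeze_zero_norm' ?_ hlim
  filter_upwards [self_mem_nhdsWithin] with x (hx : 0 < x)
  rw [norm_mul, norm_cpow_eq_rpow_re_of_pos hx, Real.rpow_add_one hx.ne', mul_comm]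
  gcongr
  simpa [abs_of_pos hx] using norm_exp_neg_sub_one_le_norm (z := x) (by simpa using hx.le)

theorem tendsto_exp_neg_sub_one_mul_cpow_atTop (hs : s.re < 0) :
    Tendsto (fun x : ℝ ↦ (exp (-(x : ℂ)) - 1) * (x : ℂ) ^ s) atTop (𝓝 0) := by
  have hlim : Tendsto (fun x : ℝ ↦ 2 * x ^ s.re) atTop (𝓝 0) := by
    simpa using (tendsto_rpow_neg_atTop (neg_pos.2 hs)).const_mul 2
  refine squeeze_zero_norm' ?_ hlim
  filter_upwards [eventually_gt_atTop 0] with x hx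
  rw [norm_mul, norm_cpow_eq_rpow_re_of_pos hx]
  gcongr
  exact norm_exp_neg_sub_one_le_two (by simpa using hx.le)

theorem mellin_exp_neg_sub_one (hs : -1 < s.re) (hs' : s.re < 0) :
    mellin (fun x : ℝ ↦ exp (-(x : ℂ)) - 1) s = Gamma s := by
  have hs0 : s ≠ 0 := by rintro rfl; simp at hs'
  have hs1 : 0 < (s + 1).re := by simpa using by linarith
  have hconv :
      IntegrableOn (fun x : ℝ ↦ (exp (-(x : ℂ)) - 1) * (s * (x : ℂ) ^ (s - 1))) (Ioi 0) := by
    refine ((mellinConvergent_exp_neg_mul_sub_one (a := 1) hs hs' zero_le_one).const_mul s).congr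
      (.of_forall fun x ↦ ?_)
    simp only [one_mul, smul_eq_mul]
    ring
  have hGamma : IntegrableOn (fun x : ℝ ↦ -exp (-(x : ℂ)) * (x : ℂ) ^ s) (Ioi 0) := by
    refine (GammaIntegral_convergent hs1).neg.congr (.of_forall fun x ↦ ?_)
    simp
  have hparts := integral_Ioi_mul_deriv_eq_deriv_mul
    (u := fun x : ℝ ↦ exp (-(x : ℂ)) - 1) (v := fun x : ℝ ↦ (x : ℂ) ^ s)
    (fun x _ ↦ by simpa using (ofRealCLM.hasDerivAt (x := x)).fun_neg.cexp.sub_const 1)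
    (fun x hx ↦ hasDerivAt_ofReal_cpow_const (ne_of_gt hx) hs0) hconv hGamma
    (tendsto_exp_neg_sub_one_mul_cpow_nhdsGT_zero hs) (tendsto_exp_neg_sub_one_mul_cpow_atTop hs')
  refine mul_left_cancel₀ hs0 ?_
  calc s * mellin (fun x : ℝ ↦ exp (-(x : ℂ)) - 1) s
      = ∫ x : ℝ in Ioi 0, (exp (-(x : ℂ)) - 1) * (s * (x : ℂ) ^ (s - 1)) := by
        rw [mellin, ← integral_const_mul]
        congr 1 with x
        simp only [smul_eq_mul]
        ring
    _ = ∫ x : ℝ in Ioi 0, exp (-(x : ℂ)) * (x : ℂ) ^ s := by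
        rw [hparts]
        simp [integral_neg]
    _ = Gamma (s + 1) := by
        simp [Gamma_eq_integral hs1, GammaIntegral]
    _ = s * Gamma s := Gamma_add_one s hs0

theorem hasMellin_exp_neg_mul_sub_one (hs : -1 < s.re) (hs' : s.re < 0) (ha : 0 ≤ a.re) :
    HasMellin (fun x : ℝ ↦ exp (-(a * x)) - 1) s (Gamma s * a ^ (-s)) := by
  refine ⟨mellinConvergent_exp_neg_mul_sub_one hs hs' ha, ?_⟩
  have hreal : ∀ r : ℝ, 0 < r →
      mellin (fun x : ℝ ↦ exp (-(r * x)) - 1) s = Gamma s * (r : ℂ) ^ (-s) := fun r hr ↦ by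
    simpa [mellin_exp_neg_sub_one hs hs', mul_comm] using
      mellin_comp_mul_left (fun x : ℝ ↦ exp (-(x : ℂ)) - 1) s hr
  have hopen : EqOn (fun a : ℂ ↦ mellin (fun x : ℝ ↦ exp (-(a * x)) - 1) s)
      (fun a ↦ Gamma s * a ^ (-s)) {a | 0 < a.re} :=
    eqOn_re_pos_of_eqOn_ofReal
      (fun a ha ↦ (differentiableAt_mellin_exp_neg_mul_sub_one hs hs' ha).differentiableWithinAt)
      (fun a ha ↦ ((differentiableAt_id.cpow_const (.inl ha)).const_mul _).differentiableWithinAt)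
      hreal
  have hcont : ContinuousOn (fun a : ℂ ↦ Gamma s * a ^ (-s)) {a | 0 ≤ a.re} := fun a ha ↦
    ((continuousAt_cpow_const_of_re_pos (.inl ha) (by simpa using hs')).const_mul
      _).continuousWithinAt
  exact hopen.of_subset_closure (continuousOn_mellin_exp_neg_mul_sub_one hs hs') hcont
    (fun a (ha : 0 < a.re) ↦ ha.le) (closure_setOfPred_lt_re 0).ge ha

end CauchySaalschutz

section HalfLines

variable {E : Type*} [NormedAddCommGroup E] {f : ℝ → E}

theorem integrable_of_integrableOn_Ioi_comp_neg (hf : IntegrableOn f (Ioi 0))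
    (hf' : IntegrableOn (fun x ↦ f (-x)) (Ioi 0)) : Integrable f := by
  have hIio : IntegrableOn f (Iio 0) := by
    simpa using (show IntegrableOn (fun x ↦ f (-x)) (Ioi (-0)) by simpa using hf').comp_neg_Iio
  rw [← integrableOn_univ, ← Iic_union_Ioi (a := (0 : ℝ))]
  exact IntegrableOn.union (by rwa [integrableOn_Iic_iff_integrableOn_Iio]) hf

theorem integral_eq_add_integral_Ioi_comp_neg [NormedSpace ℝ E] (hf : Integrable f) :
    ∫ x, f x = (∫ x in Ioi 0, f x) + ∫ x in Ioi 0, f (-x) := by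
  rw [integral_comp_neg_Ioi, neg_zero, add_comm,
    intervalIntegral.integral_Iic_add_Ioi hf.integrableOn hf.integrableOn]

end HalfLines

section Kernel

variable {d : ℂ}

/-- The kernel `x ↦ ((e^{iwx} - 1) / (ix)) |x|^{-d} Γ(d + 1) e^{-sign(x) iπd/2}`, whose integral
is `2π w₊^d`. It takes the value `0` at `x = 0`, by the convention on division by zero. -/
noncomputable def posPowKernel (d : ℂ) (w x : ℝ) : ℂ :=
  (exp (I * w * x) - 1) / (I * x) * exp (-d * Real.log |x|) * Gamma (d + 1) *
    exp (-(Real.sign x : ℂ) * I * π * d / 2)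

theorem exp_mul_posPowKernel (d : ℂ) (t u x : ℝ) :
    exp (-I * u * x) * posPowKernel d t x =
      posPowKernel d (t - u) x - posPowKernel d (-u) x := by
  have hmul : exp (I * (t - u : ℝ) * x) = exp (-I * u * x) * exp (I * t * x) := by
    rw [← exp_add]
    push_cast
    ring_nf
  have hneg : exp (I * (-u : ℝ) * x) = exp (-I * u * x) := by
    push_cast
    ring_nf
  rw [posPowKernel, posPowKernel, posPowKernel, hmul, hneg]
  ring

theorem ofReal_cpow_neg_sub_one {x : ℝ} (hx : 0 < x) (d : ℂ) :
    (x : ℂ) ^ (-d - 1) = exp (-d * Real.log x) / x := by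
  have hx0 : (x : ℂ) ≠ 0 := ofReal_ne_zero.2 hx.ne'
  rw [cpow_sub _ _ hx0, cpow_one, cpow_def_of_ne_zero hx0, ← ofReal_log hx.le, mul_comm]

theorem posPowKernel_mul_of_pos (d : ℂ) (w : ℝ) {σ x : ℝ} (hσ : σ = 1 ∨ σ = -1) (hx : 0 < x) :
    posPowKernel d w (σ * x) = σ * Gamma (d + 1) * exp (-σ * (I * π * d / 2)) / I *
      ((x : ℂ) ^ (-d - 1) • (exp (-(-(σ * I * w) * x)) - 1)) := by
  have habs : |σ * x| = x := by rcases hσ with rfl | rfl <;> simp [abs_of_pos hx]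
  have hsign : (σ * x).sign = σ := by
    rcases hσ with rfl | rfl <;> simp [Real.sign_of_pos hx, Real.sign_of_neg (neg_neg_of_pos hx)]
  have hinv : (σ : ℂ)⁻¹ = σ := by rcases hσ with rfl | rfl <;> simp
  have hexp : I * w * (σ * x : ℝ) = -(-(σ * I * w) * x) := by
    push_cast
    ring
  have hphase : -(σ : ℂ) * I * π * d / 2 = -σ * (I * π * d / 2) := by ring
  rw [posPowKernel, habs, hsign, hexp, hphase, ofReal_cpow_neg_sub_one hx, ofReal_mul, smul_eq_mul]
  simp only [div_eq_mul_inv, mul_inv, hinv]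
  ring

theorem integrableOn_posPowKernel_mul (hd : 0 < d.re) (hd' : d.re < 1) (w : ℝ) {σ : ℝ}
    (hσ : σ = 1 ∨ σ = -1) : IntegrableOn (fun x ↦ posPowKernel d w (σ * x)) (Ioi 0) :=
  IntegrableOn.congr_fun
    ((hasMellin_exp_neg_mul_sub_one (s := -d) (a := -(σ * I * w)) (by simpa using hd')
      (by simpa using hd) (by simp)).1.const_mul _)
    (fun _ hx ↦ (posPowKernel_mul_of_pos d w hσ hx).symm) measurableSet_Ioi

theorem integral_Ioi_posPowKernel_mul (hd : 0 < d.re) (hd' : d.re < 1) (w : ℝ) {σ : ℝ}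
    (hσ : σ = 1 ∨ σ = -1) :
    ∫ x in Ioi 0, posPowKernel d w (σ * x) = σ * Gamma (d + 1) * exp (-σ * (I * π * d / 2)) / I *
      (Gamma (-d) * (-(σ * I * w)) ^ d) := by
  rw [setIntegral_congr_fun measurableSet_Ioi fun x hx ↦ posPowKernel_mul_of_pos d w hσ hx,
    integral_const_mul]
  congr 1
  exact (hasMellin_exp_neg_mul_sub_one (s := -d) (a := -(σ * I * w)) (by simpa using hd')
    (by simpa using hd) (by simp)).2.trans (by rw [neg_neg])

theorem integrable_posPowKernel (hd : 0 < d.re) (hd' : d.re < 1) (w : ℝ) :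
    Integrable (posPowKernel d w) :=
  integrable_of_integrableOn_Ioi_comp_neg
    (by simpa using integrableOn_posPowKernel_mul hd hd' w (.inl rfl))
    (by simpa using integrableOn_posPowKernel_mul hd hd' w (.inr rfl))

theorem Gamma_add_one_mul_Gamma_neg (d : ℂ) :
    Gamma (d + 1) * Gamma (-d) = -(π / sin (π * d)) := by
  simpa [mul_comm, add_comm, div_neg] using Gamma_mul_Gamma_one_sub (-d)

theorem mem_integerComplement_of_re_mem_Ioo (hd : d.re ∈ Ioo 0 1) : d ∈ integerComplement := by
  rintro ⟨k, rfl⟩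
  have hk : 0 < k ∧ k < 1 := by exact_mod_cast mem_Ioo.1 hd
  lia

theorem I_mul_ofReal_cpow {y : ℝ} (hy : 0 < y) (d : ℂ) :
    (I * y) ^ d = exp (I * π * d / 2) * (y : ℂ) ^ d := by
  have hy0 : (y : ℂ) ≠ 0 := ofReal_ne_zero.2 hy.ne'
  rw [mul_comm I, cpow_def_of_ne_zero (mul_ne_zero hy0 I_ne_zero), cpow_def_of_ne_zero hy0,
    log_ofReal_mul hy I_ne_zero, ofReal_log hy.le, log_I, ← exp_add]
  ring_nf

theorem neg_I_mul_ofReal_cpow {y : ℝ} (hy : 0 < y) (d : ℂ) :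
    (-(I * y)) ^ d = exp (-(I * π * d / 2)) * (y : ℂ) ^ d := by
  have hy0 : (y : ℂ) ≠ 0 := ofReal_ne_zero.2 hy.ne'
  rw [mul_comm I, ← mul_neg, cpow_def_of_ne_zero (mul_ne_zero hy0 (neg_ne_zero.2 I_ne_zero)),
    cpow_def_of_ne_zero hy0, log_ofReal_mul hy (neg_ne_zero.2 I_ne_zero), ofReal_log hy.le,
    log_neg_I, ← exp_add]
  ring_nf

theorem posPow_of_pos {z : ℝ} (hz : 0 < z) (d : ℂ) : posPow z d = (z : ℂ) ^ d := by
  rw [posPow, if_pos hz, cpow_def_of_ne_zero (ofReal_ne_zero.2 hz.ne'), ofReal_log hz.le, mul_comm]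

theorem posPow_of_nonpos {z : ℝ} (hz : z ≤ 0) (d : ℂ) : posPow z d = 0 :=
  if_neg hz.not_gt

theorem exp_mul_I_mul_cpow_sub_exp_mul_neg_I_mul_cpow (hd : d ≠ 0) (w : ℝ) :
    exp (I * π * d / 2) * (I * w) ^ d - exp (-(I * π * d / 2)) * (-(I * w)) ^ d =
      2 * I * sin (π * d) * posPow w d := by
  rcases lt_trichotomy w 0 with hw | rfl | hw
  · have hI : I * w = -(I * (-w : ℝ)) := by simp
    rw [posPow_of_nonpos hw.le, hI, neg_neg, I_mul_ofReal_cpow (neg_pos.2 hw),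
      neg_I_mul_ofReal_cpow (neg_pos.2 hw)]
    ring
  · simp [posPow_of_nonpos, hd]
  · have hsin : 2 * I * sin (π * d) =
        exp (I * π * d / 2) * exp (I * π * d / 2) -
          exp (-(I * π * d / 2)) * exp (-(I * π * d / 2)) := by
      have hdouble : I * π * d / 2 + I * π * d / 2 = π * d * I := by ring
      rw [← exp_add, ← exp_add, ← neg_add, hdouble, ← neg_mul]
      linear_combination I * two_sin (π * d) + (exp (-(π * d) * I) - exp (π * d * I)) * I_mul_I
    rw [posPow_of_pos hw, I_mul_ofReal_cpow hw, neg_I_mul_ofReal_cpow hw, hsin]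
    ring

theorem integral_posPowKernel (hd : 0 < d.re) (hd' : d.re < 1) (w : ℝ) :
    ∫ x, posPowKernel d w x = 2 * π * posPow w d := by
  have hd0 : d ≠ 0 := by rintro rfl; simp at hd
  have hsin : sin (π * d) ≠ 0 :=
    sin_pi_mul_ne_zero (mem_integerComplement_of_re_mem_Ioo ⟨hd, hd'⟩)
  have hpos := integral_Ioi_posPowKernel_mul hd hd' w (.inl rfl)
  have hneg := integral_Ioi_posPowKernel_mul hd hd' w (.inr rfl)
  simp only [ofReal_one, ofReal_neg, one_mul, neg_mul, neg_neg] at hpos hneg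
  calc ∫ x, posPowKernel d w x
      = -(Gamma (d + 1) * Gamma (-d)) / I * (exp (I * π * d / 2) * (I * w) ^ d -
          exp (-(I * π * d / 2)) * (-(I * w)) ^ d) := by
        rw [integral_eq_add_integral_Ioi_comp_neg (integrable_posPowKernel hd hd' w), hpos, hneg]
        ring
    _ = π / sin (π * d) / I * (2 * I * sin (π * d) * posPow w d) := by
        rw [Gamma_add_one_mul_Gamma_neg, neg_neg,
          exp_mul_I_mul_cpow_sub_exp_mul_neg_I_mul_cpow hd0]
    _ = 2 * π * posPow w d := by
        field_simp

end Kernel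

theorem stmt2_general (d : ℂ) (hd1 : 0 < d.re) (hd2 : d.re < 1) (t u : ℝ) :
    Integrable (posPowKernel d t) ∧
      1 / (2 * (π : ℂ)) * ∫ x : ℝ, exp (-I * u * x) * posPowKernel d t x =
        posPow (t - u) d - posPow (-u) d := by
  refine ⟨integrable_posPowKernel hd1 hd2 t, ?_⟩
  simp_rw [exp_mul_posPowKernel]
  rw [integral_sub (integrable_posPowKernel hd1 hd2 _) (integrable_posPowKernel hd1 hd2 _),
    integral_posPowKernel hd1 hd2, integral_posPowKernel hd1 hd2]
  field_simp

/-- For `d ∈ ℂ` with `0 < Re d < 1/2`, `t ∈ ℝ` and `u ∉ {0, t}`, the function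
`x ↦ ((e^{itx} - 1)/(ix)) |x|^{-d} Γ(d+1) e^{-sign(x) iπd/2}` is Lebesgue integrable on `ℝ`
and `(1/(2π)) ∫ e^{-iux} ((e^{itx} - 1)/(ix)) |x|^{-d} Γ(d+1) e^{-sign(x) iπd/2} dx
  = (t-u)₊^d - (-u)₊^d`. -/
theorem stmt2 (d : ℂ) (hd1 : 0 < d.re) (hd2 : d.re < 1/2) (t u : ℝ) (hu : u ≠ 0) (hut : u ≠ t) :
    Integrable (fun x : ℝ =>
      ((Complex.exp (Complex.I * t * x) - 1) / (Complex.I * x)) *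
        Complex.exp (-d * Real.log |x|) * Complex.Gamma (d + 1) *
        Complex.exp (-(Real.sign x : ℂ) * Complex.I * Real.pi * d / 2)) ∧
    (1 / (2 * (Real.pi : ℂ))) *
        ∫ x : ℝ, Complex.exp (-(Complex.I) * u * x) *
          (((Complex.exp (Complex.I * t * x) - 1) / (Complex.I * x)) *
            Complex.exp (-d * Real.log |x|) * Complex.Gamma (d + 1) *
            Complex.exp (-(Real.sign x : ℂ) * Complex.I * Real.pi * d / 2)) =
      posPow (t - u) d - posPow (-u) d := by
  exact stmt2_general d hd1 (hd2.trans (by norm_num)) t u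
end

section
/- Let t ∈ ℝ \ {0} and u ∈ ℝ \ {0, t}. Then the improper integral lim_{T→∞} ∫_0^T e^{−iux} ((e^{itx} − 1)/(ix)) dx exists and equals i·log(|t−u|/|u|) + (π/2)·(sign(t−u) − sign(−u)). -/
open MeasureTheory Filter

/-!
Both exponentials have the form `exp (-p * x)` with `0 ≤ re p`, so the integral is a Frullani
integral `∫ (exp (-p * x) - exp (-q * x)) / x` with `p`, `q` in the closed right half plane. For
`q = 1`, write the difference of exponentials as an integral over the segment from `1` to `p` and
exchange the integrals. This leaves, up to sign, the integral of `(1 - exp (-w * T)) / w` over the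
segment, which tends to `log p` by dominated convergence, as `0 < re w` except possibly at `p`.
The detour through `q = 1` is needed because the segment joining two points of the imaginary axis
may contain `0`.
-/

section

open Complex Set Topology Interval

theorem mem_slitPlane_of_re_nonneg {p : ℂ} (hp : 0 ≤ p.re) (hp₀ : p ≠ 0) : p ∈ slitPlane := by
  rcases hp.lt_or_eq with hre | hre
  · exact Or.inl hre
  · exact Or.inr fun him => hp₀ (Complex.ext hre.symm him)

theorem norm_one_sub_exp_le_two {z : ℂ} (hz : z.re ≤ 0) : ‖1 - exp z‖ ≤ 2 := by
  have hexp : ‖exp z‖ ≤ 1 := by rwa [norm_exp, Real.exp_le_one_iff]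
  calc ‖1 - exp z‖ ≤ ‖(1 : ℂ)‖ + ‖exp z‖ := norm_sub_le _ _
    _ ≤ 2 := by rw [norm_one]; linarith

theorem log_I_mul_ofReal {a : ℝ} (ha : a ≠ 0) :
    log (I * a) = Real.log |a| + Real.pi / 2 * Real.sign a * I := by
  rcases ha.lt_or_gt with hneg | hpos
  · rw [show I * (a : ℂ) = (-a : ℝ) * -I by push_cast; ring,
      log_ofReal_mul (neg_pos.2 hneg) (neg_ne_zero.2 I_ne_zero), log_neg_I, abs_of_neg hneg,
      Real.sign_of_neg hneg]
    push_cast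
    ring
  · rw [mul_comm, log_ofReal_mul hpos I_ne_zero, log_I, abs_of_pos hpos, Real.sign_of_pos hpos]
    push_cast
    ring

theorem intervalIntegrable_slope {E : Type*} [NormedAddCommGroup E] [NormedSpace ℝ E] {f : ℝ → E}
    {c : ℝ} (hf : Continuous f) (hfc : DifferentiableAt ℝ f c) (a b : ℝ) :
    IntervalIntegrable (slope f c) volume a b := by
  have hcont : ContinuousOn (dslope f c) univ :=
    (continuousOn_dslope univ_mem).2 ⟨hf.continuousOn, hfc⟩
  refine (hcont.mono (subset_univ _)).intervalIntegrable.congr_ae ?_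
  filter_upwards [ae_restrict_of_ae (volume.ae_ne c)] with x hx using dslope_of_ne f hx

theorem intervalIntegrable_exp_neg_sub_exp_neg_div (p q : ℂ) (a b : ℝ) :
    IntervalIntegrable (fun x : ℝ => (exp (-p * x) - exp (-q * x)) / x) volume a b := by
  have hdiff : Differentiable ℝ fun x : ℝ => exp (-p * x) - exp (-q * x) := by
    have : Differentiable ℝ fun x : ℝ => (x : ℂ) := ofRealCLM.differentiable
    fun_prop
  convert intervalIntegrable_slope hdiff.continuous (hdiff 0) a b using 2 with x
  simp [slope_def_module, div_eq_inv_mul]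

theorem integral_exp_neg_mul {w : ℂ} (hw : w ≠ 0) (T : ℝ) :
    ∫ x in (0 : ℝ)..T, exp (-w * x) = (1 - exp (-w * T)) / w := by
  rw [integral_exp_mul_complex (neg_ne_zero.2 hw), ofReal_zero, mul_zero, exp_zero, div_neg,
    ← neg_div, neg_sub]

theorem exp_neg_sub_exp_neg_div_eq_integral (q z : ℂ) {x : ℝ} (hx : x ≠ 0) :
    (exp (-(q + z) * x) - exp (-q * x)) / x =
      -z * ∫ s in (0 : ℝ)..1, exp (-(q + s • z) * x) := by
  have hx' : (x : ℂ) ≠ 0 := ofReal_ne_zero.2 hx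
  have hderiv (w : ℂ) : HasDerivAt (fun w => -exp (-w * x) / x) (exp (-w * x)) w := by
    have := ((((hasDerivAt_id w).neg.mul_const (x : ℂ)).cexp).neg).div_const (x : ℂ)
    refine this.congr_deriv ?_
    simp only [Pi.neg_apply, id_eq]
    field_simp
  have hseg := intervalIntegral.integral_unitInterval_deriv_eq_sub (z₀ := q) (z₁ := z)
    (f' := fun w => exp (-w * x)) (by fun_prop) fun s _ => hderiv (q + s • z)
  rw [smul_eq_mul] at hseg
  rw [neg_mul z, hseg]
  ring

theorem integral_exp_neg_sub_exp_neg_div {q z : ℂ}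
    (hseg : ∀ s ∈ Icc (0 : ℝ) 1, q + s • z ≠ 0) (T : ℝ) :
    ∫ x in (0 : ℝ)..T, (exp (-(q + z) * x) - exp (-q * x)) / x =
      -z * ∫ s in (0 : ℝ)..1, (1 - exp (-(q + s • z) * T)) / (q + s • z) := by
  have hintegrable : IntegrableOn
      (Function.uncurry fun x s : ℝ => exp (-(q + s • z) * x)) (Ι 0 T ×ˢ Ι 0 1) := by
    have hcont : Continuous (Function.uncurry fun x s : ℝ => exp (-(q + s • z) * x)) := by
      unfold Function.uncurry
      fun_prop
    exact (hcont.continuousOn.integrableOn_compact (isCompact_uIcc.prod isCompact_uIcc)).mono_set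
      (prod_mono uIoc_subset_uIcc uIoc_subset_uIcc)
  calc ∫ x in (0 : ℝ)..T, (exp (-(q + z) * x) - exp (-q * x)) / x
      = ∫ x in (0 : ℝ)..T, -z * ∫ s in (0 : ℝ)..1, exp (-(q + s • z) * x) := by
        refine intervalIntegral.integral_congr_ae ?_
        filter_upwards [volume.ae_ne 0] with x hx _
          using exp_neg_sub_exp_neg_div_eq_integral q z hx
    _ = -z * ∫ s in (0 : ℝ)..1, ∫ x in (0 : ℝ)..T, exp (-(q + s • z) * x) := by
        rw [intervalIntegral.integral_const_mul, intervalIntegral_intervalIntegral_swap hintegrable]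
    _ = -z * ∫ s in (0 : ℝ)..1, (1 - exp (-(q + s • z) * T)) / (q + s • z) := by
        congr 1
        refine intervalIntegral.integral_congr fun s hs => ?_
        rw [uIcc_of_le zero_le_one] at hs
        exact integral_exp_neg_mul (hseg s hs) T

theorem tendsto_exp_neg_mul_ofReal_atTop {w : ℂ} (hw : 0 < w.re) :
    Tendsto (fun T : ℝ => exp (-w * T)) atTop (𝓝 0) := by
  rw [tendsto_exp_nhds_zero_iff]
  simp only [re_mul_ofReal, neg_re]
  exact tendsto_id.const_mul_atTop_of_neg (neg_lt_zero.2 hw)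

theorem tendsto_integral_one_sub_exp_neg_mul_div {α : Type*} {_ : MeasurableSpace α}
    {μ : Measure α} {w : α → ℂ} (hint : Integrable (fun a => (w a)⁻¹) μ)
    (hre : ∀ᵐ a ∂μ, 0 < (w a).re) :
    Tendsto (fun T : ℝ => ∫ a, (1 - exp (-w a * T)) / w a ∂μ) atTop (𝓝 (∫ a, (w a)⁻¹ ∂μ)) := by
  have hw : AEMeasurable w μ := by simpa only [inv_inv] using hint.aemeasurable.fun_inv
  refine tendsto_integral_filter_of_dominated_convergence (fun a => 2 * ‖(w a)⁻¹‖)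
    (Eventually.of_forall fun T => ?_) ?_ (hint.norm.const_mul 2) ?_
  · exact (((hw.neg.mul_const (T : ℂ)).cexp.const_sub 1).div hw).aestronglyMeasurable
  · filter_upwards [eventually_ge_atTop 0] with T hT
    filter_upwards [hre] with a ha
    have hexp : (-w a * T).re ≤ 0 := by
      rw [re_mul_ofReal, neg_re]
      exact mul_nonpos_of_nonpos_of_nonneg (neg_nonpos.2 ha.le) hT
    rw [div_eq_mul_inv, norm_mul]
    gcongr
    exact norm_one_sub_exp_le_two hexp
  · filter_upwards [hre] with a ha
    simpa using ((tendsto_exp_neg_mul_ofReal_atTop ha).const_sub 1).div_const (w a)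

theorem tendsto_integral_exp_neg_sub_exp_neg_one_div {p : ℂ} (hp : 0 ≤ p.re) (hp₀ : p ≠ 0) :
    Tendsto (fun T : ℝ => ∫ x in (0 : ℝ)..T, (exp (-p * x) - exp (-1 * x)) / x) atTop
      (𝓝 (-log p)) := by
  obtain ⟨z, rfl⟩ : ∃ z, p = 1 + z := ⟨p - 1, by ring⟩
  have hmem : 1 + z ∈ slitPlane := mem_slitPlane_of_re_nonneg hp hp₀
  have hseg : ∀ s ∈ Icc (0 : ℝ) 1, 1 + s • z ≠ 0 := fun s hs =>
    slitPlane_ne_zero (starConvex_one_slitPlane.add_smul_mem hmem hs.1 hs.2)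
  have hint : IntegrableOn (fun s : ℝ => (1 + s • z)⁻¹) (Ioc 0 1) :=
    (continuousOn_one_add_mul_inv hmem).integrableOn_Icc.mono_set Ioc_subset_Icc_self
  have hre : ∀ᵐ s : ℝ ∂volume.restrict (Ioc 0 1), 0 < (1 + s • z).re := by
    filter_upwards [ae_restrict_mem measurableSet_Ioc, ae_restrict_of_ae (volume.ae_ne 1)]
      with s hs hs₁
    have hlt : s < 1 := lt_of_le_of_ne hs.2 hs₁
    simp only [add_re, one_re, smul_re, smul_eq_mul] at hp ⊢
    nlinarith [mul_nonneg hs.1.le hp]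
  simp_rw [integral_exp_neg_sub_exp_neg_div hseg, log_eq_integral hmem, ← neg_mul,
    intervalIntegral.integral_of_le zero_le_one]
  exact (tendsto_integral_one_sub_exp_neg_mul_div hint hre).const_mul (-z)

theorem tendsto_integral_exp_neg_sub_exp_neg_div {p q : ℂ} (hp : 0 ≤ p.re) (hp₀ : p ≠ 0)
    (hq : 0 ≤ q.re) (hq₀ : q ≠ 0) :
    Tendsto (fun T : ℝ => ∫ x in (0 : ℝ)..T, (exp (-p * x) - exp (-q * x)) / x) atTop
      (𝓝 (log q - log p)) := by
  convert (tendsto_integral_exp_neg_sub_exp_neg_one_div hp hp₀).sub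
    (tendsto_integral_exp_neg_sub_exp_neg_one_div hq hq₀) using 2 with T
  · rw [← intervalIntegral.integral_sub (intervalIntegrable_exp_neg_sub_exp_neg_div _ _ _ _)
      (intervalIntegrable_exp_neg_sub_exp_neg_div _ _ _ _)]
    simp only [← sub_div, sub_sub_sub_cancel_right]
  · ring

theorem exp_mul_exp_sub_one_div_I_mul (t u x : ℂ) :
    exp (-I * u * x) * ((exp (I * t * x) - 1) / (I * x)) =
      -I * ((exp (-(I * (u - t)) * x) - exp (-(I * u) * x)) / x) := by
  have hmul : exp (-(I * (u - t)) * x) = exp (-I * u * x) * exp (I * t * x) := by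
    rw [← exp_add]
    congr 1
    ring
  rw [hmul, ← neg_mul I u, div_mul_eq_div_div, div_I]
  ring

theorem I_mul_log_I_mul_sub_log_I_mul {a b : ℝ} (ha : a ≠ 0) (hb : b ≠ 0) :
    I * (log (I * a) - log (I * b)) =
      I * Real.log (|a| / |b|) + (Real.pi / 2 : ℝ) * (Real.sign b - Real.sign a : ℝ) := by
  rw [log_I_mul_ofReal ha, log_I_mul_ofReal hb,
    Real.log_div (abs_ne_zero.2 ha) (abs_ne_zero.2 hb)]
  push_cast
  linear_combination Real.pi / 2 * (Real.sign a - Real.sign b : ℂ) * I_mul_I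

theorem stmt3_general {t u : ℂ} (hu : u ≠ 0) (hut : u ≠ t) (hu_im : u.im ≤ 0)
    (hut_im : (u - t).im ≤ 0) :
    Tendsto
      (fun T : ℝ => ∫ x in (0 : ℝ)..T,
        exp (-I * u * x) * ((exp (I * t * x) - 1) / (I * x)))
      atTop (𝓝 (I * (log (I * (u - t)) - log (I * u)))) := by
  have hre {w : ℂ} (hw : w.im ≤ 0) : 0 ≤ (I * w).re := by simpa using hw
  have hfrullani := tendsto_integral_exp_neg_sub_exp_neg_div
    (hre hut_im) (mul_ne_zero I_ne_zero (sub_ne_zero.2 hut)) (hre hu_im) (mul_ne_zero I_ne_zero hu)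
  simp_rw [exp_mul_exp_sub_one_div_I_mul, intervalIntegral.integral_const_mul]
  convert hfrullani.const_mul (-I) using 2
  ring

end

/-- For `t ≠ 0` and `u ∉ {0, t}`, the improper integral
`lim_{T→∞} ∫_0^T e^{-iux} ((e^{itx} - 1)/(ix)) dx` exists and equals
`i log(|t-u|/|u|) + (π/2)(sign(t-u) - sign(-u))`. -/
theorem stmt3 (t u : ℝ) (ht : t ≠ 0) (hu : u ≠ 0) (hut : u ≠ t) :
    Tendsto
      (fun T : ℝ => ∫ x in (0:ℝ)..T,
        Complex.exp (-(Complex.I) * u * x) *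
          ((Complex.exp (Complex.I * t * x) - 1) / (Complex.I * x)))
      atTop
      (nhds (Complex.I * (Real.log (|t - u| / |u|) : ℂ) +
        ((Real.pi / 2 : ℝ) : ℂ) * ((Real.sign (t - u) - Real.sign (-u) : ℝ) : ℂ))) := by
  rw [abs_sub_comm t u, ← neg_sub u t, Real.sign_neg, Real.sign_neg, neg_sub_neg,
    ← I_mul_log_I_mul_sub_log_I_mul (sub_ne_zero.2 hut) hu, Complex.ofReal_sub]
  exact stmt3_general (Complex.ofReal_ne_zero.2 hu) (Complex.ofReal_injective.ne hut)
    (Complex.ofReal_im u).le (by simp)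
end

section
/- For every h ∈ (0,1) and every t ∈ ℝ, the function x ↦ |e^{itx} − 1|² · |x|^{−1−2h} is Lebesgue integrable on ℝ \ {0} and ∫_ℝ |e^{itx} − 1|² · |x|^{−1−2h} dx = |t|^{2h} · π / (h · Γ(2h) · sin(hπ)). -/
open MeasureTheory

/-!
Since `|e^{iθ} - 1|² = 2 (1 - cos θ)`, evenness and scaling reduce the claim to the integral of
`(1 - cos x) x^{-1-a}` over `x > 0` with `a = 2h`. For `f ≥ 0` with Laplace transform `L`, Tonelli
and `Γ(b) x^{-b} = ∫ s^{b-1} e^{-sx} ds` give `Γ(b) ∫ f(x) x^{-b} dx = ∫ s^{b-1} L(s) ds`. With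
`f = 1 - cos` and `b = a + 1` this leaves the integral of `s^{a-1} / (1 + s²)`, which the
substitution `u = s²` turns into Euler's integral of `u^{c-1} / (1 + u)` with `c = a / 2`. That one
is the same identity for `f(x) = e^{-x}` combined with the reflection formula for `Γ`.

Integrability is read off from the values: a Bochner integral that is not `0` has an integrable
integrand.
-/

section

open Set Real

theorem setIntegral_setIntegral_swap_of_nonneg {α β : Type*} [MeasurableSpace α]
    [MeasurableSpace β] {μ : Measure α} {ν : Measure β} [SFinite μ] [SFinite ν] {s : Set α}
    {t : Set β} {F : α → β → ℝ} (hs : MeasurableSet s) (ht : MeasurableSet t)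
    (hF : AEStronglyMeasurable (Function.uncurry F) ((μ.restrict s).prod (ν.restrict t)))
    (hF_nonneg : ∀ x ∈ s, ∀ y ∈ t, 0 ≤ F x y)
    (hF_left : ∀ x ∈ s, IntegrableOn (fun y => F x y) t ν)
    (hF_right : ∀ y ∈ t, IntegrableOn (fun x => F x y) s μ) :
    ∫ x in s, ∫ y in t, F x y ∂ν ∂μ = ∫ y in t, ∫ x in s, F x y ∂μ ∂ν := by
  by_cases hF_int : Integrable (Function.uncurry F) ((μ.restrict s).prod (ν.restrict t))
  · exact integral_integral_swap hF_int
  -- Both iterated integrals are then infinite, and both Bochner integrals are `0`.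
  rw [integral_undef, integral_undef]
  · refine fun h => hF_int ((integrable_prod_iff' hF).2
      ⟨(ae_restrict_mem ht).mono hF_right, IntegrableOn.congr_fun h (fun y hy => ?_) ht⟩)
    exact setIntegral_congr_fun hs fun x hx => (norm_of_nonneg (hF_nonneg x hx y hy)).symm
  · refine fun h => hF_int ((integrable_prod_iff hF).2
      ⟨(ae_restrict_mem hs).mono hF_left, IntegrableOn.congr_fun h (fun x hx => ?_) hs⟩)
    exact setIntegral_congr_fun ht fun y hy => (norm_of_nonneg (hF_nonneg x hx y hy)).symm

theorem integrableOn_exp_neg_mul_Ioi {s : ℝ} (hs : 0 < s) :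
    IntegrableOn (fun x => exp (-(s * x))) (Ioi 0) := by
  simpa only [neg_mul] using integrableOn_exp_mul_Ioi (neg_lt_zero.2 hs) 0

theorem integral_exp_neg_mul_Ioi {s : ℝ} (hs : 0 < s) :
    ∫ x in Ioi (0 : ℝ), exp (-(s * x)) = 1 / s := by
  simpa [neg_mul] using integral_exp_mul_Ioi (neg_lt_zero.2 hs) 0

theorem integral_cos_mul_exp_neg_mul_Ioi {s : ℝ} (hs : 0 < s) (ω : ℝ) :
    ∫ x in Ioi (0 : ℝ), cos (ω * x) * exp (-(s * x)) = s / (s ^ 2 + ω ^ 2) := by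
  have hre : (-s + ω * Complex.I : ℂ).re < 0 := by simpa using hs
  have h_re (x : ℝ) : cos (ω * x) * exp (-(s * x)) =
      RCLike.re (Complex.exp ((-s + ω * Complex.I) * x)) := by
    simp [Complex.exp_re, mul_comm]
  simp_rw [h_re]
  rw [integral_re (integrableOn_exp_mul_complex_Ioi hre 0), integral_exp_mul_complex_Ioi hre 0]
  simp [Complex.div_re, Complex.normSq_apply, sq]

theorem integrableOn_cos_mul_exp_neg_mul_Ioi {s : ℝ} (hs : 0 < s) (ω : ℝ) :
    IntegrableOn (fun x => cos (ω * x) * exp (-(s * x))) (Ioi 0) := by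
  refine .of_integral_ne_zero ?_
  rw [integral_cos_mul_exp_neg_mul_Ioi hs ω]
  positivity

theorem integrableOn_one_sub_cos_mul_exp_neg_mul_Ioi {s : ℝ} (hs : 0 < s) (ω : ℝ) :
    IntegrableOn (fun x => (1 - cos (ω * x)) * exp (-(s * x))) (Ioi 0) := by
  simp only [sub_mul, one_mul]
  exact (integrableOn_exp_neg_mul_Ioi hs).sub (integrableOn_cos_mul_exp_neg_mul_Ioi hs ω)

theorem integral_one_sub_cos_mul_exp_neg_mul_Ioi {s : ℝ} (hs : 0 < s) (ω : ℝ) :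
    ∫ x in Ioi (0 : ℝ), (1 - cos (ω * x)) * exp (-(s * x)) = ω ^ 2 / (s * (s ^ 2 + ω ^ 2)) := by
  simp only [sub_mul, one_mul]
  rw [integral_sub (integrableOn_exp_neg_mul_Ioi hs) (integrableOn_cos_mul_exp_neg_mul_Ioi hs ω),
    integral_exp_neg_mul_Ioi hs, integral_cos_mul_exp_neg_mul_Ioi hs]
  field_simp
  ring

theorem integrableOn_rpow_mul_exp_neg_mul_Ioi {a r : ℝ} (ha : 0 < a) (hr : 0 < r) :
    IntegrableOn (fun x : ℝ => x ^ (a - 1) * exp (-(r * x))) (Ioi 0) := by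
  refine .of_integral_ne_zero ?_
  rw [integral_rpow_mul_exp_neg_mul_Ioi ha hr]
  positivity

theorem Gamma_mul_integral_mul_rpow_neg_Ioi {f : ℝ → ℝ} {b : ℝ} (hb : 0 < b)
    (hf : AEStronglyMeasurable f (volume.restrict (Ioi 0))) (hf_nonneg : ∀ x ∈ Ioi 0, 0 ≤ f x)
    (hf_laplace : ∀ s ∈ Ioi 0, IntegrableOn (fun x => f x * exp (-(s * x))) (Ioi 0)) :
    Gamma b * ∫ x in Ioi (0 : ℝ), f x * x ^ (-b) =
      ∫ s in Ioi (0 : ℝ), s ^ (b - 1) * ∫ x in Ioi (0 : ℝ), f x * exp (-(s * x)) := by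
  have inner_left : ∀ x ∈ Ioi (0 : ℝ), Gamma b * (f x * x ^ (-b)) =
      ∫ s in Ioi (0 : ℝ), f x * (s ^ (b - 1) * exp (-(x * s))) := fun x hx => by
    rw [integral_const_mul, integral_rpow_mul_exp_neg_mul_Ioi hb hx, one_div,
      inv_rpow (le_of_lt hx), ← rpow_neg (le_of_lt hx)]
    ring
  have factor (s x : ℝ) : f x * (s ^ (b - 1) * exp (-(x * s))) =
      s ^ (b - 1) * (f x * exp (-(s * x))) := by
    rw [mul_comm x s, mul_left_comm]
  calc Gamma b * ∫ x in Ioi (0 : ℝ), f x * x ^ (-b)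
      = ∫ x in Ioi (0 : ℝ), ∫ s in Ioi (0 : ℝ), f x * (s ^ (b - 1) * exp (-(x * s))) := by
        rw [← integral_const_mul]
        exact setIntegral_congr_fun measurableSet_Ioi inner_left
    _ = ∫ s in Ioi (0 : ℝ), ∫ x in Ioi (0 : ℝ), f x * (s ^ (b - 1) * exp (-(x * s))) := by
        refine setIntegral_setIntegral_swap_of_nonneg measurableSet_Ioi measurableSet_Ioi ?_
          (fun x hx s hs => ?_) (fun x hx => ?_) (fun s hs => ?_)
        · exact hf.comp_fst.mul (Measurable.aestronglyMeasurable (by fun_prop))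
        · exact mul_nonneg (hf_nonneg x hx)
            (mul_nonneg (rpow_nonneg (le_of_lt hs) _) (exp_nonneg _))
        · exact (integrableOn_rpow_mul_exp_neg_mul_Ioi hb hx).const_mul _
        · simp_rw [factor]
          exact (hf_laplace s hs).const_mul _
    _ = ∫ s in Ioi (0 : ℝ), s ^ (b - 1) * ∫ x in Ioi (0 : ℝ), f x * exp (-(s * x)) := by
        simp_rw [factor, integral_const_mul]

theorem integral_rpow_div_one_add_Ioi {a : ℝ} (ha : 0 < a) (ha' : a < 1) :
    ∫ x in Ioi (0 : ℝ), x ^ (a - 1) / (1 + x) = π / sin (π * a) := by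
  have merge_exp (s x : ℝ) : exp (-x) * exp (-(s * x)) = exp (-((1 + s) * x)) := by
    rw [← exp_add]
    congr 1
    ring
  have laplace_exp : ∀ s ∈ Ioi (0 : ℝ),
      ∫ x in Ioi (0 : ℝ), exp (-x) * exp (-(s * x)) = 1 / (1 + s) := fun s hs => by
    simp_rw [merge_exp]
    exact integral_exp_neg_mul_Ioi (add_pos one_pos hs)
  have laplace_exp_integrable : ∀ s ∈ Ioi (0 : ℝ),
      IntegrableOn (fun x => exp (-x) * exp (-(s * x))) (Ioi 0) := fun s hs => by
    simp_rw [merge_exp]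
    exact integrableOn_exp_neg_mul_Ioi (add_pos one_pos hs)
  have Gamma_one_sub : ∫ x in Ioi (0 : ℝ), exp (-x) * x ^ (-a) = Gamma (1 - a) := by
    rw [Gamma_eq_integral (sub_pos.2 ha'), show 1 - a - 1 = -a by ring]
  calc ∫ x in Ioi (0 : ℝ), x ^ (a - 1) / (1 + x)
      = ∫ s in Ioi (0 : ℝ), s ^ (a - 1) * ∫ x in Ioi (0 : ℝ), exp (-x) * exp (-(s * x)) :=
        setIntegral_congr_fun measurableSet_Ioi fun s hs => by
          simp only [laplace_exp s hs, mul_one_div]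
    _ = Gamma a * ∫ x in Ioi (0 : ℝ), exp (-x) * x ^ (-a) :=
        (Gamma_mul_integral_mul_rpow_neg_Ioi ha (by fun_prop) (fun x _ => exp_nonneg _)
          laplace_exp_integrable).symm
    _ = π / sin (π * a) := by rw [Gamma_one_sub, Gamma_mul_Gamma_one_sub]

theorem integral_rpow_div_one_add_rpow_Ioi {p q : ℝ} (hq : 0 < q) (hqp : q < p) :
    ∫ x in Ioi (0 : ℝ), x ^ (q - 1) / (1 + x ^ p) = π / (p * sin (π * (q / p))) := by
  have hp : 0 < p := hq.trans hqp
  have subst_rpow : ∀ x ∈ Ioi (0 : ℝ), x ^ (q - 1) / (1 + x ^ p) =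
      p⁻¹ * ((p * x ^ (p - 1)) • ((x ^ p) ^ (q / p - 1) / (1 + x ^ p))) := fun x hx => by
    have h_exp : x ^ (q - 1) = x ^ (p - 1) * (x ^ p) ^ (q / p - 1) := by
      rw [← rpow_mul (le_of_lt hx), ← rpow_add hx]
      congr 1
      field_simp
      ring
    rw [h_exp, smul_eq_mul]
    field_simp
  rw [setIntegral_congr_fun measurableSet_Ioi subst_rpow, integral_const_mul,
    integral_comp_rpow_Ioi_of_pos (g := fun u => u ^ (q / p - 1) / (1 + u)) hp,
    integral_rpow_div_one_add_Ioi (div_pos hq hp) ((div_lt_one hp).2 hqp), inv_mul_eq_div,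
    div_div, mul_comm p]

theorem integral_one_sub_cos_mul_rpow_Ioi {a : ℝ} (ha : 0 < a) (ha' : a < 2) :
    ∫ x in Ioi (0 : ℝ), (1 - cos x) * x ^ (-1 - a) =
      π / (2 * Gamma (a + 1) * sin (π * (a / 2))) := by
  have ha1 : 0 < a + 1 := add_pos ha one_pos
  have laplace_weighted : ∀ s ∈ Ioi (0 : ℝ),
      s ^ (a + 1 - 1) * ∫ x in Ioi (0 : ℝ), (1 - cos x) * exp (-(s * x)) =
        s ^ (a - 1) / (1 + s ^ (2 : ℝ)) := fun s (hs : 0 < s) => by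
    have laplace := integral_one_sub_cos_mul_exp_neg_mul_Ioi hs 1
    simp only [one_mul] at laplace
    rw [laplace, add_sub_cancel_right, rpow_sub_one hs.ne', rpow_two]
    field_simp
    ring
  have Gamma_mul : Gamma (a + 1) * ∫ x in Ioi (0 : ℝ), (1 - cos x) * x ^ (-1 - a) =
      π / (2 * sin (π * (a / 2))) := by
    rw [show -1 - a = -(a + 1) by ring,
      Gamma_mul_integral_mul_rpow_neg_Ioi ha1 (by fun_prop)
        (fun x _ => sub_nonneg.2 (cos_le_one x))
        (fun s hs => by simpa only [one_mul] using
          integrableOn_one_sub_cos_mul_exp_neg_mul_Ioi hs 1),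
      setIntegral_congr_fun measurableSet_Ioi laplace_weighted,
      integral_rpow_div_one_add_rpow_Ioi ha ha']
  rw [mul_right_comm, ← div_div, ← Gamma_mul, mul_div_cancel_left₀ _ (Gamma_pos_of_pos ha1).ne']

theorem integral_one_sub_cos_mul_abs_rpow {a : ℝ} (ha : 0 < a) (ha' : a < 2) (t : ℝ) :
    ∫ x : ℝ, (1 - cos (t * x)) * |x| ^ (-1 - a) =
      |t| ^ a * (π / (Gamma (a + 1) * sin (π * (a / 2)))) := by
  rcases eq_or_ne t 0 with rfl | ht
  · simp [zero_rpow ha.ne']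
  have ht_pos : 0 < |t| := abs_pos.2 ht
  have rescale (x : ℝ) : (1 - cos (t * x)) * |x| ^ (-1 - a) =
      |t| ^ (1 + a) * ((1 - cos (t * x)) * |t * x| ^ (-1 - a)) := by
    rw [abs_mul, mul_rpow ht_pos.le (abs_nonneg x), mul_left_comm, ← mul_assoc (|t| ^ (1 + a)),
      ← rpow_add ht_pos, show 1 + a + (-1 - a) = 0 by ring, rpow_zero, one_mul]
  have unit_frequency : ∫ x : ℝ, (1 - cos x) * |x| ^ (-1 - a) =
      π / (Gamma (a + 1) * sin (π * (a / 2))) := by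
    have := integral_comp_abs (f := fun x => (1 - cos x) * x ^ (-1 - a))
    simp only [cos_abs] at this
    rw [this, integral_one_sub_cos_mul_rpow_Ioi ha ha', mul_assoc 2, ← mul_div_assoc,
      mul_div_mul_left _ _ two_ne_zero]
  simp_rw [rescale]
  rw [integral_const_mul, Measure.integral_comp_mul_left (fun x => (1 - cos x) * |x| ^ (-1 - a)),
    unit_frequency, smul_eq_mul, ← mul_assoc, abs_inv, rpow_one_add' ht_pos.le (by positivity)]
  field_simp

theorem integrable_one_sub_cos_mul_abs_rpow {a : ℝ} (ha : 0 < a) (ha' : a < 2) (t : ℝ) :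
    Integrable fun x : ℝ => (1 - cos (t * x)) * |x| ^ (-1 - a) := by
  rcases eq_or_ne t 0 with rfl | ht
  · simp
  refine .of_integral_ne_zero ?_
  rw [integral_one_sub_cos_mul_abs_rpow ha ha' t]
  have h_sin : 0 < sin (π * (a / 2)) :=
    sin_pos_of_pos_of_lt_pi (by positivity) (by nlinarith [pi_pos])
  positivity

theorem norm_exp_I_mul_ofReal_sub_one_sq (θ : ℝ) :
    ‖Complex.exp (Complex.I * θ) - 1‖ ^ 2 = 2 * (1 - cos θ) := by
  rw [Complex.norm_exp_I_mul_ofReal_sub_one, norm_eq_abs, sq_abs, mul_pow, sin_sq_eq_half_sub,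
    mul_div_cancel₀ θ two_ne_zero]
  ring

end

/-- For `h ∈ (0,1)` and `t ∈ ℝ`, the function `x ↦ |e^{itx} - 1|² |x|^{-1-2h}` is Lebesgue
integrable on `ℝ \ {0}` and `∫ |e^{itx} - 1|² |x|^{-1-2h} dx = |t|^{2h} π / (h Γ(2h) sin(hπ))`. -/
theorem stmt8 (h : ℝ) (h0 : 0 < h) (h1 : h < 1) (t : ℝ) :
    IntegrableOn (fun x : ℝ => ‖Complex.exp (Complex.I * t * x) - 1‖ ^ 2 * |x| ^ (-1 - 2 * h))
      ({0}ᶜ : Set ℝ) ∧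
    (∫ x : ℝ, ‖Complex.exp (Complex.I * t * x) - 1‖ ^ 2 * |x| ^ (-1 - 2 * h)) =
      |t| ^ (2 * h) * Real.pi / (h * Real.Gamma (2 * h) * Real.sin (h * Real.pi)) := by
  have h_integrand (x : ℝ) : ‖Complex.exp (Complex.I * t * x) - 1‖ ^ 2 * |x| ^ (-1 - 2 * h) =
      2 * ((1 - Real.cos (t * x)) * |x| ^ (-1 - 2 * h)) := by
    rw [mul_assoc Complex.I, ← Complex.ofReal_mul, norm_exp_I_mul_ofReal_sub_one_sq, mul_assoc]
  have ha : 0 < 2 * h := by positivity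
  have ha' : 2 * h < 2 := by linarith
  simp_rw [h_integrand]
  refine ⟨((integrable_one_sub_cos_mul_abs_rpow ha ha' t).const_mul 2).integrableOn, ?_⟩
  rw [integral_const_mul, integral_one_sub_cos_mul_abs_rpow ha ha', Real.Gamma_add_one ha.ne',
    mul_div_cancel_left₀ h two_ne_zero, mul_comm h Real.pi]
  field_simp
end
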